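/- Let y_m ≠ 0, K_m > 0 and n be real numbers, and let H = (y_m/(4·K_m))·[[0,0,0,0],[0,0,−n/y_m,0],[0,0,n/K_m,−1],[0,0,−1,0]] be the Hessian matrix of the modified Hill equation at [D] = K_m. Then the eigenvalues of H are exactly 0 (with algebraic multiplicity two), (n − √(4·K_m² + n²))·y_m/(8·K_m²), and (n + √(4·K_m² + n²))·y_m/(8·K_m²); equivalently, the characteristic polynomial of H is λ²·(λ² − (n·y_m/(4·K_m²))·λ − y_m²/(16·K_m²)). -/

import Mathlib

open Polynomial

/-- The eigenvalues of the Hessian matrix of the modified Hill equation at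
`[D] = K_m` are exactly `0` (with algebraic multiplicity two),
`(n − √(4K_m² + n²))·y_m/(8K_m²)` and `(n + √(4K_m² + n²))·y_m/(8K_m²)`;
equivalently its characteristic polynomial is
`λ²·(λ² − (n·y_m/(4K_m²))·λ − y_m²/(16K_m²))`. -/
theorem stmt16 (ym Km n : ℝ) (hym : ym ≠ 0) (hK : 0 < Km)
    (H : Matrix (Fin 4) (Fin 4) ℝ)
    (hH : H = (ym / (4 * Km)) •
      (!![0, 0, 0, 0;
          0, 0, -n / ym, 0;
          0, 0, n / Km, -1;
          0, 0, -1, 0] : Matrix (Fin 4) (Fin 4) ℝ)) :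
    H.charpoly
      = X ^ 2 * (X ^ 2 - C (n * ym / (4 * Km ^ 2)) * X - C (ym ^ 2 / (16 * Km ^ 2))) ∧
    H.charpoly.roots
      = {0, 0, (n - Real.sqrt (4 * Km ^ 2 + n ^ 2)) * ym / (8 * Km ^ 2),
          (n + Real.sqrt (4 * Km ^ 2 + n ^ 2)) * ym / (8 * Km ^ 2)} := by
  have h1 : H.charpoly
      = X ^ 2 * (X ^ 2 - C (n * ym / (4 * Km ^ 2)) * X - C (ym ^ 2 / (16 * Km ^ 2))) := by
    have e1 : n * ym / (4 * Km ^ 2) = ym / (4 * Km) * (n / Km) := by field_simp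
    have e2 : ym ^ 2 / (16 * Km ^ 2) = (ym / (4 * Km)) * (ym / (4 * Km)) := by
      field_simp; norm_num
    rw [e1, e2, hH]
    generalize ym / (4 * Km) = a
    generalize n / Km = b
    generalize -n / ym = c
    have hm : Matrix.charmatrix (a • (!![0, 0, 0, 0; 0, 0, c, 0; 0, 0, b, -1; 0, 0, -1, 0] :
        Matrix (Fin 4) (Fin 4) ℝ)) = !![X, 0, 0, 0; 0, X, -C (a * c), 0;
        0, 0, X - C (a * b), C a; 0, 0, C a, X] := by
      ext1 i j
      fin_cases i <;> fin_cases j <;> simp [Matrix.charmatrix_apply]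
    rw [Matrix.charpoly, hm, Matrix.det_succ_row_zero]
    simp [Fin.sum_univ_succ, Matrix.det_fin_three, Fin.succAbove]
    ring
  refine ⟨h1, ?_⟩
  have hs : Real.sqrt (4 * Km ^ 2 + n ^ 2) ^ 2 = 4 * Km ^ 2 + n ^ 2 :=
    Real.sq_sqrt (by positivity)
  generalize Real.sqrt (4 * Km ^ 2 + n ^ 2) = s at hs
  have h2 : H.charpoly = (Multiset.map (fun a => X - C a)
      ({0, 0, (n - s) * ym / (8 * Km ^ 2), (n + s) * ym / (8 * Km ^ 2)} : Multiset ℝ)).prod := by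
    have e1 : n * ym / (4 * Km ^ 2)
        = (n - s) * ym / (8 * Km ^ 2) + (n + s) * ym / (8 * Km ^ 2) := by
      field_simp; ring
    have e2 : ym ^ 2 / (16 * Km ^ 2)
        = -(((n - s) * ym / (8 * Km ^ 2)) * ((n + s) * ym / (8 * Km ^ 2))) := by
      have : ((n - s) * ym / (8 * Km ^ 2)) * ((n + s) * ym / (8 * Km ^ 2))
          = (n ^ 2 - s ^ 2) * ym ^ 2 / (64 * Km ^ 4) := by
        field_simp; ring
      rw [this, hs]
      field_simp; ring
    rw [h1, e1, e2]
    simp only [Multiset.insert_eq_cons, Multiset.map_cons, Multiset.map_singleton,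
      Multiset.prod_cons, Multiset.prod_singleton, C_add, C_neg, C_mul, C_0]
    generalize (n - s) * ym / (8 * Km ^ 2) = p
    generalize (n + s) * ym / (8 * Km ^ 2) = q
    ring
  rw [h2, roots_multiset_prod_X_sub_C]
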